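/- arXiv:1708.05520 — 2 statements merged into one kernel-verified Lean document; each statement's English description precedes it below -/
import Mathlib

section
/- Let r̲ : Fin n₁ → ℕ and c̲ : Fin n₂ → ℕ be integer vectors and let c : Fin n₂ → ℕ satisfy c̲ ≤ c componentwise. If the domination S_j(r̲) ≤ S_j(c') holds for every j with 1 ≤ j ≤ n₁ (where c' is the conjugate of c of length n₁), then for every j with 1 ≤ j ≤ n₁ the total sum satisfies S_{n₂}(c) ≥ S_{n₂}(c̲) + S_j(r̲) − S_j(c̲'), where c̲' is the conjugate of c̲ of length n₁. -/
open Finset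

/-- Degree of row vertex `i` in a bipartite graph given by biadjacency matrix `M`. -/
def degU {n₁ n₂ : ℕ} (M : Fin n₁ → Fin n₂ → Bool) (i : Fin n₁) : ℕ :=
  (univ.filter fun j => M i j = true).card

/-- Degree of column vertex `j` in a bipartite graph given by biadjacency matrix `M`. -/
def degV {n₁ n₂ : ℕ} (M : Fin n₁ → Fin n₂ → Bool) (j : Fin n₂) : ℕ :=
  (univ.filter fun i => M i j = true).card

/-- `psum x k` = sum of the first `k` components of the vector `x`. -/
def psum {n : ℕ} (x : Fin n → ℕ) (k : ℕ) : ℕ :=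
  ∑ i ∈ univ.filter (fun i : Fin n => (i : ℕ) < k), x i

/-- `conj x i` = the `i`-th component (1-based) of the conjugate vector of `x`:
the number of indices `j` with `x j ≥ i`. -/
def conj {m : ℕ} (x : Fin m → ℕ) (i : ℕ) : ℕ :=
  (univ.filter fun j : Fin m => i ≤ x j).card

/-- The conjugate vector of `x`, taken with length `n`. -/
def conjVec (n : ℕ) {m : ℕ} (x : Fin m → ℕ) : Fin n → ℕ :=
  fun i => conj x ((i : ℕ) + 1)

/-- A pair `(r, c)` is bi-graphical if some biadjacency matrix realizes these
degrees exactly. -/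
def BiGraphical {n₁ n₂ : ℕ} (r : Fin n₁ → ℕ) (c : Fin n₂ → ℕ) : Prop :=
  ∃ M : Fin n₁ → Fin n₂ → Bool, (∀ i, degU M i = r i) ∧ (∀ j, degV M j = c j)

/-- `M` is a realization of the four-tuple `(rl, ru, cl, cu)`. -/
def IsRealization {n₁ n₂ : ℕ} (rl ru : Fin n₁ → ℕ) (cl cu : Fin n₂ → ℕ)
    (M : Fin n₁ → Fin n₂ → Bool) : Prop :=
  (∀ i, rl i ≤ degU M i ∧ degU M i ≤ ru i) ∧ (∀ j, cl j ≤ degV M j ∧ degV M j ≤ cu j)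

/-- The four-tuple `(rl, ru, cl, cu)` is realizable. -/
def Realizable {n₁ n₂ : ℕ} (rl ru : Fin n₁ → ℕ) (cl cu : Fin n₂ → ℕ) : Prop :=
  ∃ M, IsRealization rl ru cl cu M

/-- The number of edges of the bipartite graph given by `M`. -/
def edges {n₁ n₂ : ℕ} (M : Fin n₁ → Fin n₂ → Bool) : ℕ :=
  (univ.filter fun p : Fin n₁ × Fin n₂ => M p.1 p.2 = true).card

/-- `max (0, δ₁)` where `δ₁ = max over 1 ≤ j ≤ n₁ of (S_j(rl) - S_j(cl'))`
computed in the integers, `cl'` being the conjugate of `cl` of length `n₁`. -/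
def delta1 {n₁ n₂ : ℕ} (rl : Fin n₁ → ℕ) (cl : Fin n₂ → ℕ) : ℕ :=
  (Finset.Icc 1 n₁).sup fun j =>
    ((psum rl j : ℤ) - (psum (conjVec n₁ cl) j : ℤ)).toNat

/-
Read `x` as a Ferrers diagram with rows of lengths `x j`. The first `k` components of the conjugate
count the cells in the first `k` columns, so the remaining cells number `∑ j, (x j - k)`,
with truncated subtraction. This remainder is monotone in `x`, hence passing from `cl` to `c` adds
at least as many cells in total as it adds in the first `k` columns; by domination the latter is at
least the deficit of `cl` at `k`.
-/

lemma psum_self {n : ℕ} (x : Fin n → ℕ) : psum x n = ∑ i, x i := by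
  simp [psum]

lemma psum_comp_val {n : ℕ} (f : ℕ → ℕ) (k : ℕ) :
    psum (fun i : Fin n => f i) k = ∑ i ∈ range (min n k), f i := by
  have range_filter_lt : {i ∈ range n | i < k} = range (min n k) := by
    ext i
    simp only [mem_filter, mem_range, lt_min_iff]
  rw [psum, sum_filter, Fin.sum_univ_eq_sum_range (fun i => if i < k then f i else 0),
    ← sum_filter, range_filter_lt]

lemma sum_range_conj {m : ℕ} (x : Fin m → ℕ) (k : ℕ) :
    ∑ i ∈ range k, conj x (i + 1) = ∑ j, min (x j) k := by
  have row_count (j : Fin m) : #{i ∈ range k | i + 1 ≤ x j} = min (x j) k := by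
    have row_cells : {i ∈ range k | i + 1 ≤ x j} = range (min (x j) k) := by
      ext i
      simp only [mem_filter, mem_range, Nat.succ_le_iff, lt_min_iff, and_comm]
    rw [row_cells, card_range]
  calc ∑ i ∈ range k, conj x (i + 1)
      = ∑ j, #{i ∈ range k | i + 1 ≤ x j} :=
        sum_card_bipartiteAbove_eq_sum_card_bipartiteBelow fun i j => i + 1 ≤ x j
    _ = ∑ j, min (x j) k := sum_congr rfl fun j _ => row_count j

lemma psum_conjVec {m : ℕ} (n : ℕ) (x : Fin m → ℕ) (k : ℕ) :
    psum (conjVec n x) k = ∑ j, min (x j) (min n k) :=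
  (psum_comp_val (fun i => conj x (i + 1)) k).trans (sum_range_conj x (min n k))

lemma psum_conjVec_add_sum_tsub {m : ℕ} (n : ℕ) (x : Fin m → ℕ) (k : ℕ) :
    psum (conjVec n x) k + ∑ j, (x j - min n k) = psum x m := by
  rw [psum_conjVec, psum_self, ← sum_add_distrib]
  exact sum_congr rfl fun j _ => by rw [add_comm, tsub_add_min]

lemma psum_add_psum_conjVec_le {m : ℕ} (n : ℕ) {x y : Fin m → ℕ} (hxy : x ≤ y) (k : ℕ) :
    psum x m + psum (conjVec n y) k ≤ psum y m + psum (conjVec n x) k := by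
  have remainder_mono : ∑ j, (x j - min n k) ≤ ∑ j, (y j - min n k) :=
    sum_le_sum fun j _ => tsub_le_tsub_right (hxy j) _
  have hx := psum_conjVec_add_sum_tsub n x k
  have hy := psum_conjVec_add_sum_tsub n y k
  omega

/-- Lower bound on the total sum forced by the domination conditions. -/
theorem total_sum_lower_bound {n₁ n₂ : ℕ} (rl : Fin n₁ → ℕ) (cl c : Fin n₂ → ℕ)
    (hc : cl ≤ c)
    (hdom : ∀ j, 1 ≤ j → j ≤ n₁ → psum rl j ≤ psum (conjVec n₁ c) j) :
    ∀ j, 1 ≤ j → j ≤ n₁ →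
      (psum c n₂ : ℤ) ≥
        (psum cl n₂ : ℤ) + (psum rl j : ℤ) - (psum (conjVec n₁ cl) j : ℤ) := by
  intro j hj hjn
  have dominated := hdom j hj hjn
  have total_growth := psum_add_psum_conjVec_le n₁ hc j
  omega
end

section
/- Main realization theorem (existence form): Let r̲ : Fin n₁ → ℕ and c̲ : Fin n₂ → ℕ be non-increasing integer vectors and r̄ : Fin n₁ → ℕ, c̄ : Fin n₂ → ℕ integer vectors with r̲ ≤ r̄ and c̲ ≤ c̄ componentwise. If S_k(r̲) ≤ S_k(c̄') for all k = 1, …, n₁ and S_k(c̲) ≤ S_k(r̄') for all k = 1, …, n₂ (where c̄' is the conjugate of c̄ of length n₁ and r̄' is the conjugate of r̄ of length n₂), then there exists a bi-graphical pair of integer vectors (r, c) with r̲ ≤ r ≤ r̄ and c̲ ≤ c ≤ c̄ componentwise. -/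
open Finset

/-!
A matrix `M` respecting only the lower bounds `rl` on the rows and the upper bounds `cu` on the
columns assigns every cell `(i, j)` to column `j` (entry `true`, capacity `cu j`) or to row `i`
(entry `false`, capacity `n₂ - rl i`), so it exists by Hall's marriage theorem; Hall's condition
follows from the dominance of `rl` by the conjugate of `cu`. By symmetry there is a matrix `N` of
the transposed shape respecting the lower bounds `cl` and the upper bounds `ru`.

Take `M` and `N` with as few mismatches `M i j ≠ N j i` as possible. If some row had more ones in
`M` than in `N`, then, as `rl i ≤ ru i`, either `M` could give up a one there which `N` lacks or `N`
could adopt it, removing a mismatch. So every row of `M` has at most as many ones as in `N`, and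
likewise every column of `M` has at least as many as in `N`; hence `M` inherits from `N` the two
bounds it did not already satisfy.
-/

lemma exists_mem_card_fiber_le {ι κ : Type*} [Fintype ι] [DecidableEq κ] (t : ι → Finset κ)
    (b : κ → ℕ) (hall : ∀ S : Finset ι, #S ≤ ∑ k ∈ S.biUnion t, b k) :
    ∃ f : ι → κ, (∀ x, f x ∈ t x) ∧ ∀ k, #{x | f x = k} ≤ b k := by
  let slots (x : ι) : Finset (Σ k, Fin (b k)) := (t x).sigma fun _ ↦ univ
  have card_slots (S : Finset ι) : #(S.biUnion slots) = ∑ k ∈ S.biUnion t, b k := by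
    have : S.biUnion slots = (S.biUnion t).sigma fun _ ↦ univ := by ext; simp [slots]
    simp [this, card_sigma]
  obtain ⟨g, g_inj, hg⟩ := (all_card_le_biUnion_card_iff_exists_injective slots).1
    fun S ↦ (hall S).trans_eq (card_slots S).symm
  refine ⟨fun x ↦ (g x).1, fun x ↦ (mem_sigma.1 (hg x)).1, fun k ↦ ?_⟩
  calc #{x | (g x).1 = k}
      ≤ #(({k} : Finset κ).sigma fun k ↦ (univ : Finset (Fin (b k)))) :=
        card_le_card_of_injOn g (fun x hx ↦ by simpa using hx) g_inj.injOn
    _ = b k := by simp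

lemma exists_card_false_le_card_true_le {ι κ : Type*} [Fintype ι] [Fintype κ] (a : ι → ℕ)
    (b : κ → ℕ) (h : ∀ A B, #A * #B ≤ ∑ i ∈ A, a i + ∑ j ∈ B, b j) :
    ∃ M : ι → κ → Bool, (∀ i, #{j | M i j = false} ≤ a i) ∧ ∀ j, #{i | M i j = true} ≤ b j := by
  classical
  let owners (p : ι × κ) : Finset (ι ⊕ κ) := {.inl p.1, .inr p.2}
  have hall (S : Finset (ι × κ)) : #S ≤ ∑ k ∈ S.biUnion owners, Sum.elim a b k :=
    calc #S ≤ #(S.image Prod.fst) * #(S.image Prod.snd) :=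
          (card_le_card subset_product).trans_eq (card_product _ _)
      _ ≤ ∑ i ∈ S.image Prod.fst, a i + ∑ j ∈ S.image Prod.snd, b j := h _ _
      _ = ∑ k ∈ (S.image Prod.fst).disjSum (S.image Prod.snd), Sum.elim a b k := by
          simp only [sum_disjSum, Sum.elim_inl, Sum.elim_inr]
      _ = ∑ k ∈ S.biUnion owners, Sum.elim a b k := by
          congr 1
          ext (i | j) <;> simp [owners, eq_comm]
  obtain ⟨f, hf, hcap⟩ := exists_mem_card_fiber_le owners (Sum.elim a b) hall
  have eq_inl_of_ne_inr (i : ι) (j : κ) (hne : f (i, j) ≠ .inr j) : f (i, j) = .inl i :=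
    (by simpa [owners] using hf (i, j) : f (i, j) = .inl i ∨ _).resolve_right hne
  refine ⟨fun i j ↦ f (i, j) = .inr j, fun i ↦ ?_, fun j ↦ ?_⟩
  · exact (card_le_card_of_injOn (Prod.mk i)
      (fun j hj ↦ by simpa using eq_inl_of_ne_inr i j (by simpa using hj))
      (Prod.mk_right_injective i).injOn).trans (hcap (.inl i))
  · exact (card_le_card_of_injOn (·, j) (fun i hi ↦ by simpa using hi)
      (Prod.mk_left_injective j).injOn).trans (hcap (.inr j))

lemma card_mul_card_le_of_sum_le {ι κ : Type*} [Fintype κ] {r : ι → ℕ} {c : κ → ℕ} {A : Finset ι}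
    (B : Finset κ) (hA : ∑ i ∈ A, r i ≤ ∑ j, min (c j) #A) :
    #A * #B ≤ ∑ i ∈ A, (Fintype.card κ - r i) + ∑ j ∈ B, c j := by
  classical
  have hmin : ∑ j, min (c j) #A ≤ ∑ j ∈ B, c j + #Bᶜ * #A := by
    rw [← sum_add_sum_compl B]
    exact add_le_add (sum_le_sum fun _ _ ↦ min_le_left _ _)
      (sum_le_card_nsmul _ _ _ fun _ _ ↦ min_le_right _ _)
  have hcells : #B * #A + #Bᶜ * #A = Fintype.card κ * #A := by
    rw [← add_mul, card_add_card_compl]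
  have hrows : Fintype.card κ * #A ≤ ∑ i ∈ A, (Fintype.card κ - r i) + ∑ i ∈ A, r i := by
    rw [← sum_add_distrib, mul_comm]
    exact card_nsmul_le_sum _ _ _ fun _ _ ↦ le_tsub_add
  rw [mul_comm]
  omega

lemma sum_le_sum_of_antitone_of_isLowerSet {ι N : Type*} [LinearOrder ι] [AddCommMonoid N]
    [PartialOrder N] [IsOrderedCancelAddMonoid N] {f : ι → N} (hf : Antitone f) {A I : Finset ι}
    (hI : IsLowerSet (I : Set ι)) (hcard : #A = #I) : ∑ i ∈ A, f i ≤ ∑ i ∈ I, f i := by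
  rw [← sum_sdiff_le_sum_sdiff]
  let e := equivOfCardEq (card_sdiff_comm hcard)
  calc ∑ i ∈ A \ I, f i
      = ∑ i : ↥(A \ I), f i := (sum_coe_sort _ _).symm
    _ ≤ ∑ i : ↥(A \ I), f (e i) := by
        refine sum_le_sum fun i _ ↦ hf (le_of_not_ge fun hle ↦ ?_)
        exact (mem_sdiff.1 i.2).2 (hI hle (mem_sdiff.1 (e i).2).1)
    _ = ∑ i : ↥(I \ A), f i := e.sum_comp fun i ↦ f i
    _ = ∑ i ∈ I \ A, f i := sum_coe_sort _ _

lemma sum_le_psum_card {n : ℕ} {x : Fin n → ℕ} (hx : Antitone x) (A : Finset (Fin n)) :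
    ∑ i ∈ A, x i ≤ psum x #A := by
  refine sum_le_sum_of_antitone_of_isLowerSet hx ?_ ?_
  · intro i j hji hi
    rw [mem_coe, mem_filter_univ] at hi ⊢
    exact (Fin.val_le_of_le hji).trans_lt hi
  · simpa [Fin.card_filter_val_lt] using card_le_univ A

lemma psum_conjVec_le {m : ℕ} (n : ℕ) (x : Fin m → ℕ) (k : ℕ) :
    psum (conjVec n x) k ≤ ∑ j, min (x j) k := by
  calc psum (conjVec n x) k
      = ∑ j, #{i : Fin n | i < k ∧ i < x j} := by
        simp only [psum, conjVec, conj, Nat.add_one_le_iff, ← filter_filter]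
        exact sum_card_bipartiteAbove_eq_sum_card_bipartiteBelow _
    _ = ∑ j, min n (min (x j) k) := by
        simp only [← lt_min_iff, Fin.card_filter_val_lt, min_comm k]
    _ ≤ ∑ j, min (x j) k := sum_le_sum fun _ _ ↦ min_le_right _ _

lemma sum_le_sum_min_card_of_psum_le {m n : ℕ} {r : Fin n → ℕ} {c : Fin m → ℕ} (hr : Antitone r)
    (hdom : ∀ k, 1 ≤ k → k ≤ n → psum r k ≤ psum (conjVec n c) k) (A : Finset (Fin n)) :
    ∑ i ∈ A, r i ≤ ∑ j, min (c j) #A := by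
  rcases A.eq_empty_or_nonempty with rfl | hA
  · simp
  · calc ∑ i ∈ A, r i
        ≤ psum r #A := sum_le_psum_card hr A
      _ ≤ psum (conjVec n c) #A := hdom _ hA.card_pos (card_finset_fin_le A)
      _ ≤ ∑ j, min (c j) #A := psum_conjVec_le n c #A

/-- A half realization of `(r, c)`: a matrix with row degrees at least `r` and column degrees at
most `c`. A realization of `(rl, ru, cl, cu)` is a half realization of `(rl, cu)` whose transpose
is a half realization of `(cl, ru)`. -/
structure IsHalfRealization {n m : ℕ} (r : Fin n → ℕ) (c : Fin m → ℕ)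
    (M : Fin n → Fin m → Bool) : Prop where
  le_degU : ∀ i, r i ≤ degU M i
  degV_le : ∀ j, degV M j ≤ c j

theorem exists_isHalfRealization {n m : ℕ} {r : Fin n → ℕ} {c : Fin m → ℕ}
    (h : ∀ A : Finset (Fin n), ∑ i ∈ A, r i ≤ ∑ j, min (c j) #A) :
    ∃ M, IsHalfRealization r c M := by
  have hr (i : Fin n) : r i ≤ m :=
    calc r i ≤ ∑ j : Fin m, min (c j) 1 := by simpa using h {i}
      _ ≤ ∑ _j : Fin m, 1 := sum_le_sum fun _ _ ↦ min_le_right _ _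
      _ = m := by simp
  obtain ⟨M, hfalse, htrue⟩ := exists_card_false_le_card_true_le (fun i ↦ m - r i) c fun A B ↦ by
    simpa using card_mul_card_le_of_sum_le B (h A)
  refine ⟨M, fun i ↦ ?_, htrue⟩
  have hsplit : degU M i + #{j | M i j = false} = m := by
    simpa [degU] using card_filter_add_card_filter_not (s := univ) fun j ↦ M i j = true
  have := hr i
  have := hfalse i
  omega

section SetEntry

variable {n m : ℕ} {M M' : Fin n → Fin m → Bool} {i : Fin n} {j : Fin m}

/-- The matrix `M` with its entry at `(i, j)` replaced by `b`. -/
def setEntry (M : Fin n → Fin m → Bool) (i : Fin n) (j : Fin m) (b : Bool) : Fin n → Fin m → Bool :=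
  fun a k ↦ if a = i ∧ k = j then b else M a k

lemma apply_of_setEntry_false {a : Fin n} {k : Fin m} (h : setEntry M i j false a k) : M a k := by
  rw [setEntry] at h
  split_ifs at h
  exact h

lemma setEntry_true_of_apply {a : Fin n} {k : Fin m} (h : M a k) : setEntry M i j true a k := by
  rw [setEntry]
  split_ifs <;> simp [h]

lemma degU_mono (h : ∀ j, M i j → M' i j) : degU M i ≤ degU M' i :=
  card_le_card <| monotone_filter_right _ fun j _ ↦ h j

lemma degV_mono (h : ∀ i, M i j → M' i j) : degV M j ≤ degV M' j :=
  degU_mono (M := flip M) (M' := flip M') h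

lemma degU_le_degU_add_one (h : ∀ k ≠ j, M i k → M' i k) : degU M i ≤ degU M' i + 1 := by
  refine (card_le_card fun k hk ↦ ?_).trans (card_insert_le j _)
  rcases eq_or_ne k j with rfl | hkj
  · exact mem_insert_self _ _
  · rw [mem_filter_univ] at hk
    exact mem_insert_of_mem ((mem_filter_univ k).2 (h k hkj hk))

lemma degV_le_degV_add_one (h : ∀ k ≠ i, M k j → M' k j) : degV M j ≤ degV M' j + 1 :=
  degU_le_degU_add_one (M := flip M) (M' := flip M') h

variable {r : Fin n → ℕ} {c : Fin m → ℕ}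

lemma IsHalfRealization.setEntry_false (hM : IsHalfRealization r c M) (hi : r i < degU M i)
    (j : Fin m) : IsHalfRealization r c (setEntry M i j false) where
  le_degU a := by
    rcases eq_or_ne a i with rfl | ha
    · have hdeg : degU M a ≤ degU (setEntry M a j false) a + 1 :=
        degU_le_degU_add_one (j := j) fun k hk h ↦ by simpa [setEntry, hk] using h
      exact Nat.lt_add_one_iff.1 (hi.trans_le hdeg)
    · exact (hM.le_degU a).trans (degU_mono fun k h ↦ by simpa [setEntry, ha] using h)
  degV_le b := (degV_mono fun _ ↦ apply_of_setEntry_false).trans (hM.degV_le b)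

lemma IsHalfRealization.setEntry_true (hM : IsHalfRealization r c M) (hj : degV M j < c j)
    (i : Fin n) : IsHalfRealization r c (setEntry M i j true) where
  le_degU a := (hM.le_degU a).trans (degU_mono fun _ ↦ setEntry_true_of_apply)
  degV_le b := by
    rcases eq_or_ne b j with rfl | hb
    · have hdeg : degV (setEntry M i b true) b ≤ degV M b + 1 :=
        degV_le_degV_add_one (i := i) fun k hk h ↦ by simpa [setEntry, hk] using h
      exact hdeg.trans hj
    · exact (degV_mono fun k h ↦ by simpa [setEntry, hb] using h).trans (hM.degV_le b)

end SetEntry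

section Mismatch

variable {n m : ℕ}

/-- The number of cells in which `M` differs from the transpose of `N`. Keeping `N` transposed makes
rows and columns play symmetric roles. -/
def mismatch (M : Fin n → Fin m → Bool) (N : Fin m → Fin n → Bool) : ℕ :=
  #{p : Fin n × Fin m | M p.1 p.2 ≠ N p.2 p.1}

variable {M : Fin n → Fin m → Bool} {N : Fin m → Fin n → Bool}

lemma mismatch_comm (M : Fin n → Fin m → Bool) (N : Fin m → Fin n → Bool) :
    mismatch M N = mismatch N M :=
  card_equiv (Equiv.prodComm _ _) fun p ↦ by simp [eq_comm]

lemma mismatch_setEntry_lt {i : Fin n} {j : Fin m} (h : M i j ≠ N j i) :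
    mismatch (setEntry M i j (N j i)) N < mismatch M N := by
  have hsub (p : Fin n × Fin m) (hp : setEntry M i j (N j i) p.1 p.2 ≠ N p.2 p.1) :
      M p.1 p.2 ≠ N p.2 p.1 := by
    by_cases hpij : p.1 = i ∧ p.2 = j
    · rwa [hpij.1, hpij.2]
    · rwa [setEntry, if_neg hpij] at hp
  exact card_lt_card <| (ssubset_iff_of_subset (monotone_filter_right _ fun p _ ↦ hsub p)).2
    ⟨(i, j), (mem_filter_univ _).2 h, by rw [mem_filter_univ]; simp [setEntry]⟩

lemma exists_true_false_of_degV_lt_degU {i : Fin n} (h : degV N i < degU M i) :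
    ∃ j, M i j = true ∧ N j i = false := by
  obtain ⟨j, hjM, hjN⟩ := exists_mem_notMem_of_card_lt_card h
  exact ⟨j, by simpa using hjM, by simpa using hjN⟩

variable {rl ru : Fin n → ℕ} {cl cu : Fin m → ℕ}

lemma exists_mismatch_lt_of_degV_lt_degU (hr : rl ≤ ru) (hM : IsHalfRealization rl cu M)
    (hN : IsHalfRealization cl ru N) {i : Fin n} (hi : degV N i < degU M i) :
    ∃ M' N', IsHalfRealization rl cu M' ∧ IsHalfRealization cl ru N' ∧
      mismatch M' N' < mismatch M N := by
  obtain ⟨j, hMij, hNji⟩ := exists_true_false_of_degV_lt_degU hi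
  have hne : M i j ≠ N j i := by simp [hMij, hNji]
  rcases lt_or_ge (rl i) (degU M i) with hlt | hge
  · exact ⟨_, N, hM.setEntry_false hlt j, hN, hNji ▸ mismatch_setEntry_lt hne⟩
  · have hlt : degV N i < ru i := hi.trans_le (hge.trans (hr i))
    refine ⟨M, _, hM, hN.setEntry_true hlt j, ?_⟩
    rw [mismatch_comm, mismatch_comm M, ← hMij]
    exact mismatch_setEntry_lt hne.symm

theorem IsHalfRealization.realizable (hr : rl ≤ ru) (hc : cl ≤ cu)
    (hM : IsHalfRealization rl cu M) (hN : IsHalfRealization cl ru N) :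
    Realizable rl ru cl cu := by
  induction hd : mismatch M N using Nat.strong_induction_on generalizing M N with
  | _ d ih =>
  subst hd
  by_cases hrow : ∃ i, degV N i < degU M i
  · obtain ⟨i, hi⟩ := hrow
    obtain ⟨M', N', hM', hN', hlt⟩ := exists_mismatch_lt_of_degV_lt_degU hr hM hN hi
    exact ih _ hlt hM' hN' rfl
  by_cases hcol : ∃ j, degV M j < degU N j
  · obtain ⟨j, hj⟩ := hcol
    obtain ⟨N', M', hN', hM', hlt⟩ := exists_mismatch_lt_of_degV_lt_degU hc hN hM hj
    rw [mismatch_comm, mismatch_comm N] at hlt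
    exact ih _ hlt hM' hN' rfl
  push Not at hrow hcol
  exact ⟨M, fun i ↦ ⟨hM.le_degU i, (hrow i).trans (hN.degV_le i)⟩,
    fun j ↦ ⟨(hN.le_degU j).trans (hcol j), hM.degV_le j⟩⟩

end Mismatch

/-- Main realization theorem (existence form). -/
theorem main_realization {n₁ n₂ : ℕ} (rl ru : Fin n₁ → ℕ) (cl cu : Fin n₂ → ℕ)
    (hrl : Antitone rl) (hcl : Antitone cl) (hr : rl ≤ ru) (hc : cl ≤ cu)
    (hdom₁ : ∀ k, 1 ≤ k → k ≤ n₁ → psum rl k ≤ psum (conjVec n₁ cu) k)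
    (hdom₂ : ∀ k, 1 ≤ k → k ≤ n₂ → psum cl k ≤ psum (conjVec n₂ ru) k) :
    ∃ (r : Fin n₁ → ℕ) (c : Fin n₂ → ℕ),
      rl ≤ r ∧ r ≤ ru ∧ cl ≤ c ∧ c ≤ cu ∧ BiGraphical r c := by
  obtain ⟨M, hM⟩ := exists_isHalfRealization (sum_le_sum_min_card_of_psum_le hrl hdom₁)
  obtain ⟨N, hN⟩ := exists_isHalfRealization (sum_le_sum_min_card_of_psum_le hcl hdom₂)
  obtain ⟨G, hrow, hcol⟩ := hM.realizable hr hc hN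
  exact ⟨degU G, degV G, fun i ↦ (hrow i).1, fun i ↦ (hrow i).2, fun j ↦ (hcol j).1,
    fun j ↦ (hcol j).2, G, fun _ ↦ rfl, fun _ ↦ rfl⟩
end
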